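/- arXiv:2402.03990 — 3 statements merged into one kernel-verified Lean document; each statement's English description precedes it below -/
import Mathlib

section
/- Let (σ_T)_{T≥1} be a sequence of positive reals, q ∈ (0,1], ε ≥ 0 and δ ∈ [0,1) such that δ_S(σ_T, q, T, ε) ≤ δ for every T ∈ ℕ₊. Then σ_T² = Ω(T), i.e. there exist c > 0 and T₀ ∈ ℕ such that σ_T² ≥ c·T for all T ≥ T₀. -/
/-!
The privacy profile dominates every hypothesis test: for measurable `A`,
`deltaS σ q T ε ≥ P^T(A) - e^ε Q^T(A)`, where `Q = N(0, σ²)`. This holds because the density of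
`Q^T` with respect to `P^T` is `exp (-∑ plrv)` (`pi_withDensity_eq`, `mix_withDensity`), and
restricting the integrand `max (1 - e^{ε - s}) 0 ≥ 1 - e^{ε - s}` to `A` only decreases the
integral (`deltaS_ge_test`).

The test used is `A = {∑ xᵢ > qT/2}`. Under `P^T` the sum has mean `qT` and variance
`T (σ² + q(1 - q))`; under `Q^T` it has mean `0` and variance `T σ²`. Chebyshev's inequality
(`chebyshev_sum`) bounds both error probabilities, so (`deltaS_ge`)
`deltaS σ q T ε ≥ 1 - 4 (1 + e^ε) σ² / (q² T) - 1 / (q² T)`.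
If `σ² < c T` with `c` small and `T` large, the right-hand side exceeds `δ`.
-/

open MeasureTheory ProbabilityTheory Real Filter

/-- Density of the dominating-pair mixture `P_{σ,q}` for the Poisson subsampled Gaussian
mechanism with sensitivity 1: `p_{σ,q}(t) = q·φ_σ(t−1) + (1−q)·φ_σ(t)`. -/
noncomputable def mixDensity (σ q t : ℝ) : ℝ :=
  q * gaussianPDFReal 1 (σ ^ 2).toNNReal t + (1 - q) * gaussianPDFReal 0 (σ ^ 2).toNNReal t

/-- The mixture measure `P_{σ,q}`. -/
noncomputable def mixMeasure (σ q : ℝ) : Measure ℝ :=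
  MeasureTheory.volume.withDensity fun t => ENNReal.ofReal (mixDensity σ q t)

/-- The privacy loss function `t ↦ ln(p_{σ,q}(t)/φ_σ(t))`. -/
noncomputable def plrv (σ q t : ℝ) : ℝ :=
  Real.log (mixDensity σ q t / gaussianPDFReal 0 (σ ^ 2).toNNReal t)

/-- Tight privacy profile (accounting oracle) of the `T`-fold composition of the Poisson
subsampled Gaussian mechanism: `δ_S(σ, q, T, ε) = E_{s ∼ L_{σ,q,T}}[max(1 − e^{ε−s}, 0)]`,
where `L_{σ,q,T}` is the sum of `T` independent copies of the PLRV. -/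
noncomputable def deltaS (σ q : ℝ) (T : ℕ) (ε : ℝ) : ℝ :=
  ∫ x : Fin T → ℝ, max (1 - Real.exp (ε - ∑ i, plrv σ q (x i))) 0
    ∂(Measure.pi fun _ => mixMeasure σ q)

open scoped ENNReal NNReal

/-- If `Q` has density `f` with respect to `P`, then `Qⁿ` has density `∏ i, f (x i)` with respect to
`Pⁿ`. It suffices to compare on boxes, where independence of coordinates factors the integral. -/
lemma pi_withDensity_eq {n : ℕ} (P Q : Measure ℝ) [IsProbabilityMeasure P]
    [IsProbabilityMeasure Q] (f : ℝ → ℝ≥0∞) (hf : Measurable f) (hQ : P.withDensity f = Q) :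
    (Measure.pi fun _ : Fin n => P).withDensity (fun x => ∏ i, f (x i)) =
      Measure.pi fun _ : Fin n => Q := by
  symm
  refine Measure.pi_eq fun s hs => ?_
  rw [withDensity_apply _ (MeasurableSet.univ_pi hs),
    ← lintegral_indicator (MeasurableSet.univ_pi hs)]
  have hg : ∀ i, Measurable ((s i).indicator f) := fun i => hf.indicator (hs i)
  have hind : iIndepFun (fun i (x : Fin n → ℝ) => (s i).indicator f (x i))
      (Measure.pi fun _ : Fin n => P) := iIndepFun_pi fun i => (hg i).aemeasurable
  have hprod : ∀ x : Fin n → ℝ, (Set.univ.pi s).indicator (fun x => ∏ i, f (x i)) x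
      = ∏ i, (s i).indicator f (x i) := by
    intro x
    by_cases hx : x ∈ Set.univ.pi s
    · rw [Set.indicator_of_mem hx]
      exact Finset.prod_congr rfl fun i _ => (Set.indicator_of_mem (hx i trivial) f).symm
    · rw [Set.indicator_of_notMem hx]
      simp only [Set.mem_pi, Set.mem_univ, true_imp_iff, not_forall] at hx
      obtain ⟨i, hi⟩ := hx
      exact (Finset.prod_eq_zero (Finset.mem_univ i) (Set.indicator_of_notMem hi f)).symm
  simp_rw [hprod]
  have h1 := lintegral_prod_eq_prod_lintegral_of_indepFun (Finset.univ)
    (fun i (x : Fin n → ℝ) => (s i).indicator f (x i)) hind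
    (fun i => (hg i).comp (measurable_pi_apply i))
  rw [h1]
  refine Finset.prod_congr rfl fun i _ => ?_
  rw [(measurePreserving_eval (fun _ : Fin n => P) i).lintegral_comp (hg i),
    lintegral_indicator (hs i), ← hQ, withDensity_apply _ (hs i)]

lemma var_ne_zero {σ : ℝ} (hσ : 0 < σ) : (σ ^ 2).toNNReal ≠ 0 := by
  simpa using hσ.ne'

/-- `P_{σ,q}` as a convex combination of Gaussian measures, which reduces its moments to Gaussian
ones. -/
lemma mixMeasure_eq {σ q : ℝ} (hσ : 0 < σ) (hq : q ∈ Set.Ioc (0 : ℝ) 1) :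
    mixMeasure σ q = ENNReal.ofReal q • gaussianReal 1 (σ ^ 2).toNNReal
      + ENNReal.ofReal (1 - q) • gaussianReal 0 (σ ^ 2).toNNReal := by
  have hq1 : 0 ≤ 1 - q := by linarith [hq.2]
  rw [gaussianReal_of_var_ne_zero _ (var_ne_zero hσ),
    gaussianReal_of_var_ne_zero _ (var_ne_zero hσ),
    ← withDensity_smul _ (measurable_gaussianPDF _ _),
    ← withDensity_smul _ (measurable_gaussianPDF _ _),
    ← withDensity_add_left ((measurable_gaussianPDF _ _).const_smul _), mixMeasure]
  congr 1
  ext t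
  simp only [mixDensity, Pi.add_apply, Pi.smul_apply, smul_eq_mul, gaussianPDF]
  rw [ENNReal.ofReal_add (mul_nonneg hq.1.le (gaussianPDFReal_nonneg _ _ _))
    (mul_nonneg hq1 (gaussianPDFReal_nonneg _ _ _)), ENNReal.ofReal_mul hq.1.le,
    ENNReal.ofReal_mul hq1]

lemma isProbabilityMeasure_mix {σ q : ℝ} (hσ : 0 < σ) (hq : q ∈ Set.Ioc (0 : ℝ) 1) :
    IsProbabilityMeasure (mixMeasure σ q) := by
  constructor
  rw [mixMeasure_eq hσ hq]
  simp only [Measure.add_apply, Measure.smul_apply, measure_univ, smul_eq_mul, mul_one]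
  rw [← ENNReal.ofReal_add hq.1.le (by linarith [hq.2])]
  simp

lemma memLp_mix {σ q : ℝ} (hσ : 0 < σ) (hq : q ∈ Set.Ioc (0 : ℝ) 1) :
    MemLp id 2 (mixMeasure σ q) := by
  rw [memLp_two_iff_integrable_sq measurable_id.aestronglyMeasurable, mixMeasure_eq hσ hq]
  exact ((memLp_id_gaussianReal' 2 (by simp)).integrable_sq.smul_measure (by simp)).add_measure
    ((memLp_id_gaussianReal' 2 (by simp)).integrable_sq.smul_measure (by simp))

lemma integral_mix {σ q : ℝ} (hσ : 0 < σ) (hq : q ∈ Set.Ioc (0 : ℝ) 1) {f : ℝ → ℝ}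
    (hf : ∀ m, Integrable f (gaussianReal m (σ ^ 2).toNNReal)) :
    ∫ t, f t ∂mixMeasure σ q = q * ∫ t, f t ∂gaussianReal 1 (σ ^ 2).toNNReal
      + (1 - q) * ∫ t, f t ∂gaussianReal 0 (σ ^ 2).toNNReal := by
  rw [mixMeasure_eq hσ hq, integral_add_measure ((hf 1).smul_measure (by simp))
    ((hf 0).smul_measure (by simp)), integral_smul_measure, integral_smul_measure,
    ENNReal.toReal_ofReal hq.1.le, ENNReal.toReal_ofReal (by linarith [hq.2]), smul_eq_mul,
    smul_eq_mul]

lemma mean_mix {σ q : ℝ} (hσ : 0 < σ) (hq : q ∈ Set.Ioc (0 : ℝ) 1) :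
    ∫ t, t ∂mixMeasure σ q = q := by
  rw [integral_mix (f := fun t => t) hσ hq fun m =>
    (memLp_id_gaussianReal' (μ := m) 1 (by simp)).integrable le_rfl]
  simp [integral_id_gaussianReal]

lemma sq_gaussian (σ m : ℝ) :
    ∫ t, t ^ 2 ∂gaussianReal m (σ ^ 2).toNNReal = σ ^ 2 + m ^ 2 := by
  have h := variance_eq_sub (memLp_id_gaussianReal' (μ := m) (v := (σ ^ 2).toNNReal) 2 (by simp))
  rw [variance_id_gaussianReal] at h
  simp only [Pi.pow_apply, id, integral_id_gaussianReal] at h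
  rw [Real.coe_toNNReal _ (sq_nonneg σ)] at h
  linarith

lemma variance_mix {σ q : ℝ} (hσ : 0 < σ) (hq : q ∈ Set.Ioc (0 : ℝ) 1) :
    Var[id; mixMeasure σ q] = σ ^ 2 + q * (1 - q) := by
  have := isProbabilityMeasure_mix hσ hq
  rw [variance_eq_sub (memLp_mix hσ hq)]
  simp only [Pi.pow_apply, id]
  rw [mean_mix hσ hq, integral_mix (f := fun t => t ^ 2) hσ hq fun m =>
    (memLp_id_gaussianReal' (μ := m) 2 (by simp)).integrable_sq, sq_gaussian, sq_gaussian]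
  ring

/-- Chebyshev's inequality for the sum of `n` independent samples from `P`. -/
lemma chebyshev_sum {n : ℕ} (P : Measure ℝ) [IsProbabilityMeasure P] (hP : MemLp id 2 P)
    {a : ℝ} (ha : 0 < a) :
    (Measure.pi fun _ : Fin n => P).real {x | a ≤ |∑ i, x i - n * ∫ t, t ∂P|}
      ≤ n * Var[id; P] / a ^ 2 := by
  have hmem : ∀ i : Fin n, MemLp (fun x : Fin n → ℝ => x i) 2 (Measure.pi fun _ : Fin n => P) :=
    fun i => hP.comp_measurePreserving (measurePreserving_eval (fun _ : Fin n => P) i)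
  have hsum : MemLp (∑ i, fun x : Fin n → ℝ => id (x i)) 2 (Measure.pi fun _ : Fin n => P) :=
    memLp_finsetSum' _ fun i _ => hmem i
  have hint : ∫ x, (∑ i, fun x : Fin n → ℝ => id (x i)) x ∂(Measure.pi fun _ : Fin n => P)
      = n * ∫ t, t ∂P := by
    simp only [Finset.sum_apply, id]
    rw [integral_finsetSum _ fun i _ => (hmem i).integrable one_le_two]
    have : ∀ i : Fin n, ∫ x : Fin n → ℝ, x i ∂(Measure.pi fun _ : Fin n => P) = ∫ t, t ∂P := by
      intro i
      conv_rhs => rw [← (measurePreserving_eval (fun _ : Fin n => P) i).map_eq]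
      rw [integral_map (measurable_pi_apply i).aemeasurable (by fun_prop)]
    simp [this]
  have hvar := variance_sum_pi (μ := fun _ : Fin n => P) (X := fun _ => id) fun _ => hP
  have h := meas_ge_le_variance_div_sq hsum ha
  rw [hvar, hint] at h
  simp only [Finset.sum_const, Finset.card_univ, Fintype.card_fin, nsmul_eq_mul,
    Finset.sum_apply, id] at h
  exact ENNReal.toReal_le_of_le_ofReal
    (div_nonneg (mul_nonneg n.cast_nonneg (variance_nonneg _ _)) (sq_nonneg a)) h

lemma mixDensity_pos {σ q : ℝ} (hσ : 0 < σ) (hq : q ∈ Set.Ioc (0 : ℝ) 1) (t : ℝ) :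
    0 < mixDensity σ q t := by
  have h1 := mul_pos hq.1 (gaussianPDFReal_pos 1 _ t (var_ne_zero hσ))
  have h2 := mul_nonneg (sub_nonneg.2 hq.2) (gaussianPDFReal_nonneg 0 (σ ^ 2).toNNReal t)
  unfold mixDensity
  linarith

lemma measurable_mixDensity (σ q : ℝ) : Measurable (mixDensity σ q) := by
  unfold mixDensity
  fun_prop

lemma measurable_plrv (σ q : ℝ) : Measurable (plrv σ q) :=
  ((measurable_mixDensity σ q).div (measurable_gaussianPDFReal _ _)).log

lemma exp_neg_plrv {σ q : ℝ} (hσ : 0 < σ) (hq : q ∈ Set.Ioc (0 : ℝ) 1) (t : ℝ) :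
    exp (-plrv σ q t) = gaussianPDFReal 0 (σ ^ 2).toNNReal t / mixDensity σ q t := by
  rw [plrv, exp_neg, exp_log (div_pos (mixDensity_pos hσ hq t)
    (gaussianPDFReal_pos 0 _ t (var_ne_zero hσ))), inv_div]

/-- `exp (-plrv)` is the likelihood ratio `dQ_σ / dP_{σ,q}`. -/
lemma mix_withDensity {σ q : ℝ} (hσ : 0 < σ) (hq : q ∈ Set.Ioc (0 : ℝ) 1) :
    (mixMeasure σ q).withDensity (fun t => ENNReal.ofReal (exp (-plrv σ q t)))
      = gaussianReal 0 (σ ^ 2).toNNReal := by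
  rw [mixMeasure, ← withDensity_mul _ (measurable_mixDensity σ q).ennreal_ofReal
    (measurable_plrv σ q).fun_neg.exp.ennreal_ofReal,
    gaussianReal_of_var_ne_zero _ (var_ne_zero hσ)]
  congr 1
  ext t
  rw [Pi.mul_apply, ← ENNReal.ofReal_mul (mixDensity_pos hσ hq t).le, exp_neg_plrv hσ hq,
    mul_div_cancel₀ _ (mixDensity_pos hσ hq t).ne', gaussianPDF]

/-- Every measurable test `A` bounds the privacy profile from below by `P^T(A) - e^ε Q^T(A)`. -/
lemma deltaS_ge_test {σ q : ℝ} (hσ : 0 < σ) (hq : q ∈ Set.Ioc (0 : ℝ) 1) (T : ℕ) (ε : ℝ)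
    {A : Set (Fin T → ℝ)} (hA : MeasurableSet A) :
    (Measure.pi fun _ : Fin T => mixMeasure σ q).real A
      - exp ε * (Measure.pi fun _ : Fin T => gaussianReal 0 (σ ^ 2).toNNReal).real A
      ≤ deltaS σ q T ε := by
  have := isProbabilityMeasure_mix hσ hq
  set P := Measure.pi fun _ : Fin T => mixMeasure σ q with hP
  have hs : Measurable fun x : Fin T → ℝ => ∑ i, plrv σ q (x i) :=
    Finset.measurable_fun_sum _ fun i _ => (measurable_plrv σ q).comp (measurable_pi_apply i)
  have hdens : P.withDensity (fun x => ENNReal.ofReal (exp (-∑ i, plrv σ q (x i))))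
      = Measure.pi fun _ : Fin T => gaussianReal 0 (σ ^ 2).toNNReal := by
    rw [← pi_withDensity_eq (mixMeasure σ q) _ _ (measurable_plrv σ q).fun_neg.exp.ennreal_ofReal
      (mix_withDensity hσ hq)]
    congr 1
    ext x
    rw [← ENNReal.ofReal_prod_of_nonneg fun i _ => (exp_pos _).le, ← exp_sum,
      Finset.sum_neg_distrib]
  have hlint : ∀ B : Set (Fin T → ℝ), MeasurableSet B →
      ∫⁻ x in B, ENNReal.ofReal (exp (-∑ i, plrv σ q (x i))) ∂P
        = (Measure.pi fun _ : Fin T => gaussianReal 0 (σ ^ 2).toNNReal) B := by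
    intro B hB
    rw [← hdens, withDensity_apply _ hB]
  have hQA : ∫ x in A, exp (-∑ i, plrv σ q (x i)) ∂P
      = (Measure.pi fun _ : Fin T => gaussianReal 0 (σ ^ 2).toNNReal).real A := by
    rw [integral_eq_lintegral_of_nonneg_ae (ae_of_all _ fun x => (exp_pos _).le)
      hs.fun_neg.exp.aestronglyMeasurable, hlint A hA, Measure.real]
  have hintexp : Integrable (fun x => exp (-∑ i, plrv σ q (x i))) P := by
    refine ⟨hs.fun_neg.exp.aestronglyMeasurable, ?_⟩
    rw [hasFiniteIntegral_iff_ofReal (ae_of_all _ fun x => (exp_pos _).le), ← setLIntegral_univ,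
      hlint _ MeasurableSet.univ]
    exact measure_lt_top _ _
  have hintmax : Integrable (fun x => max (1 - exp (ε - ∑ i, plrv σ q (x i))) 0) P := by
    refine Integrable.of_bound (C := 1)
      ((measurable_const.sub (hs.const_sub ε).exp).max measurable_const).aestronglyMeasurable
      (ae_of_all _ fun x => ?_)
    rw [norm_of_nonneg (le_max_right _ _)]
    exact max_le (by linarith [exp_pos (ε - ∑ i, plrv σ q (x i))]) zero_le_one
  calc P.real A - exp ε * (Measure.pi fun _ : Fin T => gaussianReal 0 (σ ^ 2).toNNReal).real A
      = ∫ x in A, (1 - exp ε * exp (-∑ i, plrv σ q (x i))) ∂P := by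
        rw [integral_sub (integrable_const _) (hintexp.const_mul _).integrableOn,
          integral_const_mul, hQA]
        simp
    _ ≤ ∫ x in A, max (1 - exp (ε - ∑ i, plrv σ q (x i))) 0 ∂P := by
        refine integral_mono ((integrable_const _).sub (hintexp.const_mul _).integrableOn)
          hintmax.integrableOn fun x => ?_
        simp only [sub_eq_add_neg ε, exp_add]
        exact le_max_left _ _
    _ ≤ deltaS σ q T ε :=
        setIntegral_le_integral hintmax (ae_of_all _ fun x => le_max_right _ _)

/-- Quantitative lower bound on the privacy profile, from the threshold test `∑ xᵢ > qT/2`, the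
midpoint of the means of the sum under `Q^T` and `P^T`. -/
lemma deltaS_ge {σ q : ℝ} (hσ : 0 < σ) (hq : q ∈ Set.Ioc (0 : ℝ) 1) {T : ℕ} (hT : 1 ≤ T)
    (ε : ℝ) :
    1 - 4 * (1 + exp ε) * σ ^ 2 / (q ^ 2 * T) - 1 / (q ^ 2 * T) ≤ deltaS σ q T ε := by
  have hPp := isProbabilityMeasure_mix hσ hq
  have hq0 := hq.1
  have hT0 : (0 : ℝ) < T := by exact_mod_cast hT
  have ha : 0 < q * T / 2 := by positivity
  set P := Measure.pi fun _ : Fin T => mixMeasure σ q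
  set Q := Measure.pi fun _ : Fin T => gaussianReal 0 (σ ^ 2).toNNReal
  set A : Set (Fin T → ℝ) := {x | q * T / 2 < ∑ i, x i} with hAdef
  have hA : MeasurableSet A := measurableSet_lt measurable_const (by fun_prop)
  have hPA : 1 - P.real A ≤ 4 * σ ^ 2 / (q ^ 2 * T) + 1 / (q ^ 2 * T) := by
    rw [← probReal_compl_eq_one_sub hA]
    have h := chebyshev_sum (n := T) (mixMeasure σ q) (memLp_mix hσ hq) ha
    rw [mean_mix hσ hq, variance_mix hσ hq] at h
    calc P.real Aᶜ ≤ P.real {x | q * T / 2 ≤ |∑ i, x i - T * q|} := by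
          refine measureReal_mono fun x hx => ?_
          simp only [hAdef, Set.mem_compl_iff, Set.mem_ofPred_eq, not_lt] at hx ⊢
          exact le_abs.2 (Or.inr (by linarith))
      _ ≤ _ := h
      _ = 4 * σ ^ 2 / (q ^ 2 * T) + 4 * (q * (1 - q)) / (q ^ 2 * T) := by
          field_simp
          ring
      _ ≤ _ := by
          gcongr
          nlinarith [sq_nonneg (2 * q - 1)]
  have hQA : Q.real A ≤ 4 * σ ^ 2 / (q ^ 2 * T) := by
    have h := chebyshev_sum (n := T) (gaussianReal 0 (σ ^ 2).toNNReal)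
      (memLp_id_gaussianReal' 2 (by simp)) ha
    rw [integral_id_gaussianReal, variance_id_gaussianReal,
      Real.coe_toNNReal _ (sq_nonneg σ)] at h
    calc Q.real A ≤ Q.real {x | q * T / 2 ≤ |∑ i, x i - T * 0|} := by
          refine measureReal_mono fun x hx => ?_
          simp only [hAdef, Set.mem_ofPred_eq] at hx ⊢
          exact le_abs.2 (Or.inl (by linarith))
      _ ≤ _ := h
      _ = _ := by
          field_simp
          norm_num
  have h := deltaS_ge_test hσ hq T ε hA
  have h2 := mul_le_mul_of_nonneg_left hQA (exp_pos ε).le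
  have h3 : 4 * (1 + exp ε) * σ ^ 2 / (q ^ 2 * T)
      = 4 * σ ^ 2 / (q ^ 2 * T) + exp ε * (4 * σ ^ 2 / (q ^ 2 * T)) := by ring
  linarith

/-- If `δ_S(σ_T, q, T, ε) ≤ δ < 1` for every `T ≥ 1`, then `σ_T² = Ω(T)`. -/
theorem sigma_sq_Omega_T (σ : ℕ → ℝ) (hσ : ∀ T, 1 ≤ T → 0 < σ T)
    (q : ℝ) (hq : q ∈ Set.Ioc (0 : ℝ) 1) (ε : ℝ) (hε : 0 ≤ ε)
    (δ : ℝ) (hδ : δ ∈ Set.Ico (0 : ℝ) 1)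
    (hbound : ∀ T : ℕ, 1 ≤ T → deltaS (σ T) q T ε ≤ δ) :
    ∃ c > (0 : ℝ), ∃ T₀ : ℕ, ∀ T : ℕ, T₀ ≤ T → c * T ≤ (σ T) ^ 2 := by
  have hq0 := hq.1
  have hδ1 : 0 < 1 - δ := by linarith [hδ.2]
  have hE := exp_pos ε
  -- Each of the two error terms in `deltaS_ge` is made at most `(1 - δ) / 4`.
  obtain ⟨T₀, hT₀⟩ := exists_nat_ge (4 / (q ^ 2 * (1 - δ)))
  refine ⟨q ^ 2 * (1 - δ) / (16 * (1 + exp ε)), by positivity, max 1 T₀, fun T hT => ?_⟩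
  have hT1 : 1 ≤ T := le_trans (le_max_left _ _) hT
  have hTpos : (0 : ℝ) < T := by exact_mod_cast hT1
  have hTT : 4 / (q ^ 2 * (1 - δ)) ≤ T :=
    hT₀.trans (by exact_mod_cast le_trans (le_max_right _ _) hT)
  by_contra! hlt
  have h := (deltaS_ge (hσ T hT1) hq hT1 ε).trans (hbound T hT1)
  have h1 : 4 * (1 + exp ε) * σ T ^ 2 / (q ^ 2 * T) ≤ (1 - δ) / 4 := by
    calc 4 * (1 + exp ε) * σ T ^ 2 / (q ^ 2 * T)
        ≤ 4 * (1 + exp ε) * (q ^ 2 * (1 - δ) / (16 * (1 + exp ε)) * T) / (q ^ 2 * T) := by gcongr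
      _ = (1 - δ) / 4 := by
          field_simp
          norm_num
  have h2 : 1 / (q ^ 2 * T) ≤ (1 - δ) / 4 := by
    rw [div_le_iff₀ (by positivity)] at hTT ⊢
    nlinarith
  linarith
end

section
/- Let q₁, q₂ ∈ (0,1], ε ≥ 0, and let (σ_T)_{T≥1} be positive reals with σ_T² ≥ c·T for some c > 0 and all sufficiently large T. Then |δ_S(σ_T, q₁, T, ε) − δ_S(σ_T·q₂/q₁, q₂, T, ε)| → 0 as T → ∞. -/
/-!
After rescaling by the noise level, the mixture with parameters `(σ, q)` has likelihood ratio
`g(z) = q·e^{az - a²/2} + 1 - q`, `a = 1/σ`, with respect to `N(0,1)` (`likRatio`), and the privacy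
profile becomes `E[max(∏ g(zᵢ) - e^ε, 0)]` for standard Gaussian `zᵢ` (`deltaS_eq`). Both profiles
are thus expectations over the same space, and since `x ↦ max(x - e^ε, 0)` is 1-Lipschitz, their
difference is at most the `L¹`, hence the `L²`, distance of the two product likelihood ratios
(`sq_integral_diff_le`). Expanding the square and using independence, the squared `L²` distance is
`A^T - 2B^T + C^T`, where `A`, `B`, `C` are explicit second moments because `E[L_a L_b] = e^{ab}`
for Gaussian likelihood ratios.

Write `u = 1/σ_T² = O(1/T)`. Each of `A`, `B`, `C` has the form `1 + w(e^{ku} - 1)` with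
`w k = q₁²`; this is where the choice of noise `σ_T q₂/q₁` enters. Hence each differs from
`e^{q₁² u}` by `O(u²)`, the `T`-th powers differ by `O(T u²) = O(1/T)` (`tendsto_moment`), and
`A^T - 2B^T + C^T → 0`.
-/

open MeasureTheory ProbabilityTheory Real Filter

/-! ### Densities of product measures -/

/-- The product of copies of a measure with a real density is the product measure with the
product density. -/
lemma pi_withDensity_ofReal {μ : Measure ℝ} [IsProbabilityMeasure μ] {g : ℝ → ℝ}
    (hg0 : ∀ x, 0 ≤ g x) (hgi : Integrable g μ) (T : ℕ) :
    Measure.pi (fun _ : Fin T => μ.withDensity fun x => ENNReal.ofReal (g x)) =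
      (Measure.pi fun _ : Fin T => μ).withDensity
        fun x => ENNReal.ofReal (∏ i, g (x i)) := by
  have hfin : IsFiniteMeasure (μ.withDensity fun x => ENNReal.ofReal (g x)) :=
    isFiniteMeasure_withDensity_ofReal hgi.2
  refine Measure.pi_eq fun s hs => ?_
  rw [withDensity_apply _ (MeasurableSet.univ_pi hs), Measure.restrict_pi_pi]
  have hint : Integrable (fun x : Fin T → ℝ => ∏ i, g (x i))
      (Measure.pi fun i => μ.restrict (s i)) :=
    Integrable.fintype_prod_dep (f := fun _ => g) fun i => hgi.restrict
  rw [← ofReal_integral_eq_lintegral_ofReal hint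
    (ae_of_all _ fun x => Finset.prod_nonneg fun i _ => hg0 _),
    integral_fintype_prod_eq_prod (fun _ => g),
    ENNReal.ofReal_prod_of_nonneg fun i _ => integral_nonneg hg0]
  refine Finset.prod_congr rfl fun i _ => ?_
  rw [withDensity_apply _ (hs i),
    ofReal_integral_eq_lintegral_ofReal hgi.restrict (ae_of_all _ hg0)]

/-! ### The likelihood ratio in standardized coordinates -/

/-- The likelihood ratio of the mixture `q·N(a,1) + (1-q)·N(0,1)` with respect to `N(0,1)`. With
`a = 1/σ` it is the ratio `p_{σ,q}/φ_σ` evaluated at `σ z`. -/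
noncomputable def likRatio (a q z : ℝ) : ℝ := q * exp (a * z - a ^ 2 / 2) + (1 - q)

lemma likRatio_pos {q : ℝ} (hq : q ∈ Set.Ioc (0 : ℝ) 1) (a z : ℝ) : 0 < likRatio a q z := by
  have := exp_pos (a * z - a ^ 2 / 2)
  have h1 : 0 ≤ 1 - q := sub_nonneg.2 hq.2
  have := mul_pos hq.1 this
  unfold likRatio
  linarith

lemma measurable_likRatio (a q : ℝ) : Measurable (likRatio a q) := by
  unfold likRatio; fun_prop

lemma mixDensity_eq {σ : ℝ} (hσ : 0 < σ) (q t : ℝ) :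
    mixDensity σ q t =
      gaussianPDFReal 0 (σ ^ 2).toNNReal t * likRatio (1 / σ) q (t / σ) := by
  have h : gaussianPDFReal 1 (σ ^ 2).toNNReal t =
      gaussianPDFReal 0 (σ ^ 2).toNNReal t * exp (1 / σ * (t / σ) - (1 / σ) ^ 2 / 2) := by
    simp only [gaussianPDFReal, Real.coe_toNNReal _ (sq_nonneg σ)]
    rw [mul_assoc _ (exp _) (exp _), ← exp_add]
    congr 2
    field_simp
    ring
  rw [mixDensity, h, likRatio]
  ring

lemma plrv_eq {σ : ℝ} (hσ : 0 < σ) (q t : ℝ) :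
    plrv σ q t = Real.log (likRatio (1 / σ) q (t / σ)) := by
  have hv : (σ ^ 2).toNNReal ≠ 0 := by simpa using hσ.ne'
  rw [plrv, mixDensity_eq hσ, mul_div_cancel_left₀ _ (gaussianPDFReal_pos _ _ _ hv).ne']

lemma integrable_exp_std (a : ℝ) :
    Integrable (fun z => exp (a * z - a ^ 2 / 2)) (gaussianReal 0 1) := by
  simp_rw [sub_eq_add_neg, exp_add]
  exact (integrable_exp_mul_gaussianReal a).mul_const _

lemma integrable_likRatio (a q : ℝ) : Integrable (likRatio a q) (gaussianReal 0 1) :=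
  ((integrable_exp_std a).const_mul q).add (integrable_const _)

lemma exp_mul_exp_std (a b z : ℝ) : exp (a * z - a ^ 2 / 2) * exp (b * z - b ^ 2 / 2) =
    exp (a * b) * exp ((a + b) * z - (a + b) ^ 2 / 2) := by
  rw [← exp_add, ← exp_add]; congr 1; ring

lemma integral_exp_std (a : ℝ) :
    ∫ z, exp (a * z - a ^ 2 / 2) ∂(gaussianReal 0 1) = 1 := by
  have h := congrFun (mgf_id_gaussianReal (μ := 0) (v := 1)) a
  simp only [mgf, id] at h
  simp_rw [sub_eq_add_neg, exp_add]
  rw [integral_mul_const, h, ← exp_add]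
  simp

lemma likRatio_mul (a p b q z : ℝ) : likRatio a p z * likRatio b q z =
    p * q * exp (a * b) * exp ((a + b) * z - (a + b) ^ 2 / 2) +
      p * (1 - q) * exp (a * z - a ^ 2 / 2) + (1 - p) * q * exp (b * z - b ^ 2 / 2) +
      (1 - p) * (1 - q) := by
  have := exp_mul_exp_std a b z
  unfold likRatio
  linear_combination p * q * this

lemma integrable_likRatio_mul (a p b q : ℝ) :
    Integrable (fun z => likRatio a p z * likRatio b q z) (gaussianReal 0 1) := by
  simp_rw [likRatio_mul]
  exact ((((integrable_exp_std _).const_mul _).add ((integrable_exp_std _).const_mul _)).add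
    ((integrable_exp_std _).const_mul _)).add (integrable_const _)

/-- Second moments of likelihood ratios, from `E[L_a L_b] = e^{ab}` for the Gaussian
likelihood ratios `L_a`. -/
lemma integral_likRatio_mul (a p b q : ℝ) :
    ∫ z, likRatio a p z * likRatio b q z ∂(gaussianReal 0 1) =
      1 + p * q * (exp (a * b) - 1) := by
  simp_rw [likRatio_mul]
  have h1 := (integrable_exp_std (a + b)).const_mul (p * q * exp (a * b))
  have h2 := (integrable_exp_std a).const_mul (p * (1 - q))
  have h3 := (integrable_exp_std b).const_mul ((1 - p) * q)
  rw [integral_add ((h1.fun_add h2).fun_add h3) (integrable_const _), integral_add (h1.fun_add h2) h3,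
    integral_add h1 h2]
  simp only [integral_const_mul, integral_exp_std, integral_const]
  simp
  ring

/-! ### The privacy profile as an integral against the standard Gaussian -/

lemma mixMeasure_eq_s2 {σ : ℝ} (hσ : 0 < σ) (q : ℝ) :
    mixMeasure σ q = (gaussianReal 0 (σ ^ 2).toNNReal).withDensity
      fun t => ENNReal.ofReal (likRatio (1 / σ) q (t / σ)) := by
  have hv : (σ ^ 2).toNNReal ≠ 0 := by simpa using hσ.ne'
  have hm := measurable_likRatio (1 / σ) q
  rw [gaussianReal_of_var_ne_zero _ hv, ← withDensity_mul _ (measurable_gaussianPDF _ _)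
    (by fun_prop), mixMeasure]
  congr 1
  ext t
  rw [mixDensity_eq hσ, ENNReal.ofReal_mul (gaussianPDFReal_nonneg _ _ _)]
  rfl

lemma gaussian_eq_map {σ : ℝ} :
    gaussianReal 0 (σ ^ 2).toNNReal = (gaussianReal 0 1).map (fun z => σ * z) := by
  rw [gaussianReal_map_const_mul]
  congr 1
  · simp
  · ext; simp [sq_nonneg]

lemma deltaS_eq {σ q : ℝ} (hσ : 0 < σ) (hq : q ∈ Set.Ioc (0 : ℝ) 1) (T : ℕ) (ε : ℝ) :
    deltaS σ q T ε = ∫ z : Fin T → ℝ, max ((∏ i, likRatio (1 / σ) q (z i)) - exp ε) 0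
      ∂(Measure.pi fun _ => gaussianReal 0 1) := by
  have hm := measurable_likRatio (1 / σ) q
  have hmap : Measurable fun z : ℝ => σ * z := by fun_prop
  have hi : Integrable (fun t => likRatio (1 / σ) q (t / σ))
      (gaussianReal 0 (σ ^ 2).toNNReal) := by
    rw [gaussian_eq_map, integrable_map_measure
      (Measurable.aestronglyMeasurable (by fun_prop)) hmap.aemeasurable]
    refine (integrable_likRatio (1 / σ) q).congr (ae_of_all _ fun z => ?_)
    simp [mul_div_cancel_left₀ _ hσ.ne']
  rw [deltaS, mixMeasure_eq_s2 hσ, pi_withDensity_ofReal (fun t => (likRatio_pos hq _ _).le) hi, integral_withDensity_eq_integral_toReal_smul (by fun_prop)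
    (ae_of_all _ fun _ => ENNReal.ofReal_lt_top), gaussian_eq_map]
  have : IsProbabilityMeasure ((gaussianReal 0 1).map fun z : ℝ => σ * z) :=
    Measure.isProbabilityMeasure_map hmap.aemeasurable
  rw [← Measure.pi_map_pi (f := fun (_ : Fin T) (z : ℝ) => σ * z) fun _ => hmap.aemeasurable]
  rw [integral_map (Measurable.aemeasurable (by fun_prop))]
  · refine integral_congr_ae (ae_of_all _ fun z => ?_)
    have hP : 0 < ∏ i, likRatio (1 / σ) q (z i) := Finset.prod_pos fun i _ => likRatio_pos hq _ _
    simp only [plrv_eq hσ, mul_div_cancel_left₀ _ hσ.ne', ENNReal.toReal_ofReal hP.le, smul_eq_mul]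
    rw [← Real.log_prod fun i _ => (likRatio_pos hq _ _).ne', exp_sub, exp_log hP,
      mul_max_of_nonneg _ _ hP.le, mul_sub, mul_div_cancel₀ _ hP.ne', mul_one, mul_zero]
  · simp only [plrv_eq hσ]
    exact Measurable.aestronglyMeasurable (by fun_prop)

/-! ### The second-moment bound -/

/-- The difference of privacy profiles is controlled by the `L²` distance of the product
likelihood ratios, whose square factorizes over the coordinates. -/
lemma sq_integral_diff_le {a b p q : ℝ} (T : ℕ) (K : ℝ) :
    ((∫ z : Fin T → ℝ, max ((∏ i, likRatio a p (z i)) - K) 0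
        ∂(Measure.pi fun _ => gaussianReal 0 1)) -
      ∫ z : Fin T → ℝ, max ((∏ i, likRatio b q (z i)) - K) 0
        ∂(Measure.pi fun _ => gaussianReal 0 1)) ^ 2 ≤
    (1 + p * p * (exp (a * a) - 1)) ^ T - 2 * (1 + p * q * (exp (a * b) - 1)) ^ T +
      (1 + q * q * (exp (b * b) - 1)) ^ T := by
  set μ : Measure (Fin T → ℝ) := Measure.pi fun _ => gaussianReal 0 1 with hμ
  have hprod : ∀ a p b q, Integrable (fun z : Fin T → ℝ =>
      (∏ i, likRatio a p (z i)) * ∏ i, likRatio b q (z i)) μ := fun a p b q => by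
    simp_rw [← Finset.prod_mul_distrib]
    exact Integrable.fintype_prod (f := fun _ z => likRatio a p z * likRatio b q z)
      fun _ => integrable_likRatio_mul a p b q
  have hval : ∀ a p b q, ∫ z : Fin T → ℝ, (∏ i, likRatio a p (z i)) * ∏ i, likRatio b q (z i) ∂μ =
      (1 + p * q * (exp (a * b) - 1)) ^ T := fun a p b q => by
    simp_rw [← Finset.prod_mul_distrib]
    rw [integral_fintype_prod_eq_pow (fun z => likRatio a p z * likRatio b q z),
      integral_likRatio_mul, Fintype.card_fin]
  have hint : ∀ a p, Integrable (fun z : Fin T → ℝ => ∏ i, likRatio a p (z i)) μ := fun a p =>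
    Integrable.fintype_prod (f := fun _ z => likRatio a p z) fun _ => integrable_likRatio a p
  have hmax : ∀ a p, Integrable (fun z : Fin T → ℝ => max ((∏ i, likRatio a p (z i)) - K) 0) μ :=
    fun a p => ((hint a p).sub (integrable_const K)).pos_part
  set F : (Fin T → ℝ) → ℝ := fun z => (∏ i, likRatio a p (z i)) - ∏ i, likRatio b q (z i) with hF
  have hFi : Integrable F μ := (hint a p).sub (hint b q)
  have hF2 : (fun z => F z ^ 2) = fun z =>
      (∏ i, likRatio a p (z i)) * (∏ i, likRatio a p (z i)) -
      2 * ((∏ i, likRatio a p (z i)) * ∏ i, likRatio b q (z i)) +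
      (∏ i, likRatio b q (z i)) * ∏ i, likRatio b q (z i) := by
    ext z; simp only [hF]; ring
  have hF2i : Integrable (fun z => F z ^ 2) μ := by
    rw [hF2]
    exact ((hprod a p a p).sub ((hprod a p b q).const_mul 2)).add (hprod b q b q)
  have hF2v : ∫ z, F z ^ 2 ∂μ = (1 + p * p * (exp (a * a) - 1)) ^ T -
      2 * (1 + p * q * (exp (a * b) - 1)) ^ T + (1 + q * q * (exp (b * b) - 1)) ^ T := by
    have hsub : Integrable (fun z : Fin T → ℝ =>
        (∏ i, likRatio a p (z i)) * (∏ i, likRatio a p (z i)) -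
        2 * ((∏ i, likRatio a p (z i)) * ∏ i, likRatio b q (z i))) μ :=
      (hprod a p a p).sub ((hprod a p b q).const_mul 2)
    rw [hF2, integral_add hsub (hprod b q b q),
      integral_sub (hprod a p a p) ((hprod a p b q).const_mul 2), integral_const_mul]
    simp only [hval]
  rw [← hF2v, ← integral_sub (hmax a p) (hmax b q)]
  have hle : |∫ z : Fin T → ℝ, max ((∏ i, likRatio a p (z i)) - K) 0 -
      max ((∏ i, likRatio b q (z i)) - K) 0 ∂μ| ≤ ∫ z, |F z| ∂μ := by
    refine (abs_integral_le_integral_abs).trans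
      (integral_mono ((hmax a p).sub (hmax b q)).abs hFi.abs fun z => ?_)
    refine (abs_max_sub_max_le_abs _ _ _).trans_eq ?_
    simp [hF]
  -- Cauchy–Schwarz on a probability space, as nonnegativity of `∫ (|F| - m)²` with `m = ∫ |F|`.
  set m := ∫ z, |F z| ∂μ with hm
  have hCS : 0 ≤ ∫ z, (|F z| - m) ^ 2 ∂μ := integral_nonneg fun z => sq_nonneg _
  have hexp : ∫ z, (|F z| - m) ^ 2 ∂μ = ∫ z, F z ^ 2 ∂μ - m ^ 2 := by
    have : (fun z => (|F z| - m) ^ 2) = fun z => F z ^ 2 - 2 * m * |F z| + m ^ 2 := by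
      ext z; rw [sub_sq, sq_abs]; ring
    have hsub : Integrable (fun z => F z ^ 2 - 2 * m * |F z|) μ :=
      hF2i.sub (hFi.abs.const_mul _)
    rw [this, integral_add hsub (integrable_const _),
      integral_sub hF2i (hFi.abs.const_mul _), integral_const_mul, ← hm]
    simp
    ring
  calc _ ≤ m ^ 2 := sq_le_sq' (by linarith [(abs_le.1 hle).1]) (abs_le.1 hle).2
    _ ≤ _ := by linarith

/-! ### Asymptotics of the second moments -/

/-- All three second moments share the same first-order behaviour: `(1 + w(e^{ku}-1))^T` is
asymptotic to `e^{wkuT}` when `u = O(1/T)`, so only the product `w * k` matters. -/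
lemma tendsto_moment {u : ℕ → ℝ} {c w k : ℝ} (hc : 0 < c) (hw : 0 ≤ w) (hk : 0 ≤ k)
    (hu : ∀ᶠ T : ℕ in atTop, 0 ≤ u T ∧ u T ≤ c / T) :
    Tendsto (fun T : ℕ => (1 + w * (exp (k * u T) - 1)) ^ T - exp (w * k * u T) ^ T)
      atTop (nhds 0) := by
  have hlim : ∀ C : ℝ, Tendsto (fun T : ℕ => C / (T : ℝ)) atTop (nhds 0) := fun C =>
    tendsto_const_div_atTop_nhds_zero_nat C
  refine squeeze_zero_norm' (a := fun T : ℕ =>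
    (w * k ^ 2 + (w * k) ^ 2) * c ^ 2 * exp (2 * (w * k) * c) / T) ?_ (hlim _)
  filter_upwards [hu, eventually_ge_atTop 1,
    (hlim (k * c)).eventually (gt_mem_nhds (zero_lt_one' ℝ)),
    (hlim (w * k * c)).eventually (gt_mem_nhds (zero_lt_one' ℝ))] with T ⟨h0, h1⟩ hT hk1 hm1
  have hT0 : (0 : ℝ) < T := by exact_mod_cast hT
  set v := u T
  have hkv : k * v ≤ 1 := by
    calc k * v ≤ k * (c / T) := by gcongr
      _ = k * c / T := by ring
      _ ≤ 1 := hk1.le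
  have hmv : w * k * v ≤ 1 := by
    calc w * k * v ≤ w * k * (c / T) := by gcongr
      _ = w * k * c / T := by ring
      _ ≤ 1 := hm1.le
  have hkv0 : 0 ≤ k * v := by positivity
  have hmv0 : 0 ≤ w * k * v := by positivity
  have e1 := abs_le.1 (abs_exp_sub_one_sub_id_le (by rwa [abs_of_nonneg hkv0]))
  have e2 := abs_le.1 (abs_exp_sub_one_sub_id_le (by rwa [abs_of_nonneg hmv0]))
  have hdiff : |(1 + w * (exp (k * v) - 1)) - exp (w * k * v)| ≤
      (w * k ^ 2 + (w * k) ^ 2) * v ^ 2 := by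
    have l1 := mul_le_mul_of_nonneg_left e1.1 hw
    have l2 := mul_le_mul_of_nonneg_left e1.2 hw
    rw [abs_le]
    constructor <;> nlinarith [e2.1, e2.2]
  have hx0 : 0 ≤ 1 + w * (exp (k * v) - 1) := by
    have := mul_nonneg hw (sub_nonneg.2 (one_le_exp hkv0))
    linarith
  have hxB : 1 + w * (exp (k * v) - 1) ≤ exp (2 * (w * k) * v) := by
    have : exp (k * v) - 1 ≤ 2 * (k * v) := by nlinarith [e1.2]
    have := mul_le_mul_of_nonneg_left this hw
    linarith [add_one_le_exp (2 * (w * k) * v)]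
  have hyB : exp (w * k * v) ≤ exp (2 * (w * k) * v) := exp_le_exp.2 (by linarith)
  have hmaxB : max |1 + w * (exp (k * v) - 1)| |exp (w * k * v)| ^ (T - 1) ≤
      exp (2 * (w * k) * c) := by
    rw [abs_of_nonneg hx0, abs_of_pos (exp_pos _)]
    calc _ ≤ exp (2 * (w * k) * v) ^ (T - 1) :=
          pow_le_pow_left₀ (le_max_of_le_left hx0) (max_le hxB hyB) _
      _ ≤ exp (2 * (w * k) * v) ^ T :=
          pow_le_pow_right₀ (one_le_exp (by linarith)) (Nat.sub_le _ _)
      _ = exp (T * (2 * (w * k) * v)) := (exp_nat_mul _ _).symm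
      _ ≤ exp (2 * (w * k) * c) := by
          apply exp_le_exp.2
          calc T * (2 * (w * k) * v) ≤ T * (2 * (w * k) * (c / T)) := by gcongr
            _ = _ := by field_simp
  rw [Real.norm_eq_abs]
  calc _ ≤ _ := abs_pow_sub_pow_le _ _ _
    _ ≤ (w * k ^ 2 + (w * k) ^ 2) * (c / T) ^ 2 * T * exp (2 * (w * k) * c) := by
        gcongr
        exact hdiff.trans (by gcongr)
    _ = _ := by field_simp

/-- If `σ_T² ≥ c·T` eventually (for some `c > 0`), then the tight privacy profiles of the
`T`-fold compositions with subsampling rates `q₁` (noise `σ_T`) and `q₂` (noise `σ_T·q₂/q₁`)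
become asymptotically equal as `T → ∞`. -/
theorem deltaS_diff_tendsto_zero
    (q₁ q₂ : ℝ) (hq₁ : q₁ ∈ Set.Ioc (0 : ℝ) 1) (hq₂ : q₂ ∈ Set.Ioc (0 : ℝ) 1)
    (ε : ℝ) (hε : 0 ≤ ε) (σ : ℕ → ℝ) (hσ : ∀ T, 1 ≤ T → 0 < σ T)
    (c : ℝ) (hc : 0 < c) (hgrowth : ∀ᶠ T : ℕ in Filter.atTop, c * T ≤ (σ T) ^ 2) :
    Filter.Tendsto
      (fun T : ℕ => |deltaS (σ T) q₁ T ε - deltaS (σ T * q₂ / q₁) q₂ T ε|)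
      Filter.atTop (nhds 0) := by
  obtain ⟨h1, h1'⟩ := hq₁
  obtain ⟨h2, h2'⟩ := hq₂
  have hu : ∀ᶠ T : ℕ in atTop, 0 ≤ 1 / (σ T) ^ 2 ∧ 1 / (σ T) ^ 2 ≤ c⁻¹ / T := by
    filter_upwards [hgrowth, eventually_ge_atTop 1] with T hT hT1
    have hT0 : (0 : ℝ) < T := by exact_mod_cast hT1
    refine ⟨by positivity, ?_⟩
    calc 1 / (σ T) ^ 2 ≤ 1 / (c * T) := one_div_le_one_div_of_le (by positivity) hT
      _ = c⁻¹ / T := by field_simp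
  -- In each of the three cases `w * k = q₁²`.
  have t1 := tendsto_moment (w := q₁ * q₁) (k := 1) (inv_pos.2 hc) (by positivity)
    (by positivity) hu
  have t2 := tendsto_moment (w := q₁ * q₂) (k := q₁ / q₂) (inv_pos.2 hc) (by positivity)
    (by positivity) hu
  have t3 := tendsto_moment (w := q₂ * q₂) (k := (q₁ / q₂) ^ 2) (inv_pos.2 hc) (by positivity)
    (by positivity) hu
  have hsq : Tendsto (fun T : ℕ =>
      (deltaS (σ T) q₁ T ε - deltaS (σ T * q₂ / q₁) q₂ T ε) ^ 2) atTop (nhds 0) := by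
    have hlim := (t1.sub (t2.const_mul 2)).add t3
    rw [mul_zero, sub_zero, add_zero] at hlim
    refine squeeze_zero' (Eventually.of_forall fun T => sq_nonneg _) ?_ hlim
    filter_upwards [eventually_ge_atTop 1] with T hT
    have hs := hσ T hT
    have hs2 : 0 < σ T * q₂ / q₁ := by positivity
    rw [deltaS_eq hs ⟨h1, h1'⟩, deltaS_eq hs2 ⟨h2, h2'⟩]
    refine (sq_integral_diff_le T (exp ε)).trans_eq ?_
    have m2 : q₁ * q₂ * (q₁ / q₂) = q₁ * q₁ * 1 := by field_simp
    have m3 : q₂ * q₂ * (q₁ / q₂) ^ 2 = q₁ * q₁ * 1 := by field_simp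
    have x1 : 1 / σ T * (1 / σ T) = 1 * (1 / σ T ^ 2) := by field_simp
    have x2 : 1 / σ T * (1 / (σ T * q₂ / q₁)) = q₁ / q₂ * (1 / σ T ^ 2) := by field_simp
    have x3 : 1 / (σ T * q₂ / q₁) * (1 / (σ T * q₂ / q₁)) =
        (q₁ / q₂) ^ 2 * (1 / σ T ^ 2) := by field_simp
    rw [m2, m3, x1, x2, x3]
    ring
  have := hsq.sqrt
  simpa [Real.sqrt_sq_eq_abs] using this
end

section
/- For a mechanism M from (X,∼) to probability measures on Y and ε ≥ 0, define the accounting oracle AO_M(ε) = inf{δ ∈ [0,1] : M is (ε,δ)-DP}. If M and M' are two mechanisms from (X,∼) to probability measures on Y with sup_{x∈X} TV(M(x), M'(x)) ≤ d for some d ≥ 0, then |AO_M(ε) − AO_{M'}(ε)| ≤ (1 + e^ε)·d. -/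
/-!
For each event `A`, replacing `M` by `M'` changes `M x A` by at most `d` and `e^ε * M x' A` by at
most `e^ε * d`. So if `M'` is `(ε, δ)`-DP then `M` is `(ε, δ + (1 + e^ε) d)`-DP
(`IsDP.of_close`). Taking the infimum over `δ` bounds one oracle by the other
(`AO_le_AO_add`), and the situation is symmetric in `M` and `M'`.
-/

open MeasureTheory Real

/-- `(ε,δ)`-differential privacy of a mechanism `M` with respect to a neighbouring
relation `neigh`. -/
def IsDP {X Y : Type*} [MeasurableSpace Y] (neigh : X → X → Prop)
    (M : X → Measure Y) (ε δ : ℝ) : Prop :=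
  ∀ A : Set Y, MeasurableSet A → ∀ x x', neigh x x' →
    ((M x) A).toReal ≤ Real.exp ε * ((M x') A).toReal + δ

/-- Total variation distance between two measures:
`TV(P,Q) = sup_A |P(A) − Q(A)|` over measurable sets `A`. -/
noncomputable def tvDist {α : Type*} [MeasurableSpace α] (P Q : Measure α) : ℝ :=
  ⨆ A : {s : Set α // MeasurableSet s}, |(P A.1).toReal - (Q A.1).toReal|

/-- The accounting oracle: `AO_M(ε)` is the smallest `δ ∈ [0,1]` such that `M` is
`(ε,δ)`-DP. -/
noncomputable def AO {X Y : Type*} [MeasurableSpace Y] (neigh : X → X → Prop)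
    (M : X → Measure Y) (ε : ℝ) : ℝ :=
  sInf {δ : ℝ | δ ∈ Set.Icc (0 : ℝ) 1 ∧ IsDP neigh M ε δ}

/-- Evaluating at a single event is bounded by the total variation distance; probability
is needed so that the supremum defining `tvDist` is over a bounded family. -/
lemma abs_sub_le_tvDist {α : Type*} [MeasurableSpace α] (P Q : Measure α)
    [IsProbabilityMeasure P] [IsProbabilityMeasure Q] {A : Set α} (hA : MeasurableSet A) :
    |(P A).toReal - (Q A).toReal| ≤ tvDist P Q := by
  have hbdd : BddAbove (Set.range fun A : {s : Set α // MeasurableSet s} =>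
      |(P A.1).toReal - (Q A.1).toReal|) := by
    refine ⟨1, ?_⟩
    rintro _ ⟨B, rfl⟩
    have h1 : (P B.1).toReal ≤ 1 := measureReal_le_one
    have h2 : (Q B.1).toReal ≤ 1 := measureReal_le_one
    have h3 : 0 ≤ (P B.1).toReal := ENNReal.toReal_nonneg
    have h4 : 0 ≤ (Q B.1).toReal := ENNReal.toReal_nonneg
    exact abs_le.2 ⟨by linarith, by linarith⟩
  exact le_ciSup hbdd ⟨A, hA⟩

/-- Privacy is stable under perturbations that are uniformly small on events. -/
lemma IsDP.of_close {X Y : Type*} [MeasurableSpace Y] {neigh : X → X → Prop}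
    {M M' : X → Measure Y} {ε δ d : ℝ}
    (hclose : ∀ x A, MeasurableSet A → |((M x) A).toReal - ((M' x) A).toReal| ≤ d)
    (h : IsDP neigh M' ε δ) : IsDP neigh M ε (δ + (1 + Real.exp ε) * d) := by
  intro A hA x x' hxx'
  have h1 := (abs_le.1 (hclose x A hA)).2
  have h2 := (abs_le.1 (hclose x' A hA)).1
  have h3 := h A hA x x' hxx'
  have h4 : Real.exp ε * ((M' x') A).toReal ≤ Real.exp ε * (((M x') A).toReal + d) :=
    mul_le_mul_of_nonneg_left (by linarith) (Real.exp_pos ε).le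
  linarith

lemma isDP_one {X Y : Type*} [MeasurableSpace Y] (neigh : X → X → Prop)
    (M : X → Measure Y) (hM : ∀ x, IsProbabilityMeasure (M x)) (ε : ℝ) :
    IsDP neigh M ε 1 := by
  intro A _ x x' _
  have h1 : ((M x) A).toReal ≤ 1 := measureReal_le_one
  have h2 : 0 ≤ Real.exp ε * ((M x') A).toReal := by positivity
  linarith

lemma AO_le_AO_add {X Y : Type*} [MeasurableSpace Y] (neigh : X → X → Prop)
    (M M' : X → Measure Y)
    (hM : ∀ x, IsProbabilityMeasure (M x)) (hM' : ∀ x, IsProbabilityMeasure (M' x))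
    (ε d : ℝ) (hd : 0 ≤ d)
    (hclose : ∀ x A, MeasurableSet A → |((M x) A).toReal - ((M' x) A).toReal| ≤ d) :
    AO neigh M ε ≤ AO neigh M' ε + (1 + Real.exp ε) * d := by
  have hbdd : BddBelow {δ : ℝ | δ ∈ Set.Icc (0 : ℝ) 1 ∧ IsDP neigh M ε δ} :=
    ⟨0, fun δ hδ => hδ.1.1⟩
  have hone := isDP_one neigh M hM ε
  rw [← sub_le_iff_le_add]
  refine le_csInf ⟨1, ⟨zero_le_one, le_rfl⟩, isDP_one neigh M' hM' ε⟩ ?_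
  rintro δ ⟨⟨hδ0, -⟩, hδ⟩
  rw [sub_le_iff_le_add]
  have hc : 0 ≤ (1 + Real.exp ε) * d := by positivity
  -- The perturbed parameter may exceed `1`, where only the trivial bound `AO ≤ 1` applies.
  rcases le_total (δ + (1 + Real.exp ε) * d) 1 with h | h
  · exact csInf_le hbdd ⟨⟨by linarith, h⟩, hδ.of_close hclose⟩
  · exact (csInf_le hbdd ⟨⟨zero_le_one, le_rfl⟩, hone⟩).trans h

/-- If `sup_x TV(M(x), M'(x)) ≤ d`, then the accounting oracles of `M` and `M'` differ by
at most `(1 + e^ε)·d`. -/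
theorem abs_AO_sub_AO_le {X Y : Type*} [MeasurableSpace Y] (neigh : X → X → Prop)
    (M M' : X → Measure Y)
    (hM : ∀ x, IsProbabilityMeasure (M x)) (hM' : ∀ x, IsProbabilityMeasure (M' x))
    (ε d : ℝ) (hε : 0 ≤ ε) (hd : 0 ≤ d)
    (hTV : ∀ x, tvDist (M x) (M' x) ≤ d) :
    |AO neigh M ε - AO neigh M' ε| ≤ (1 + Real.exp ε) * d := by
  have hclose : ∀ x A, MeasurableSet A →
      |((M x) A).toReal - ((M' x) A).toReal| ≤ d := fun x A hA =>
    (abs_sub_le_tvDist (M x) (M' x) hA).trans (hTV x)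
  have h1 := AO_le_AO_add neigh M M' hM hM' ε d hd hclose
  have h2 := AO_le_AO_add neigh M' M hM' hM ε d hd fun x A hA => by
    rw [abs_sub_comm]
    exact hclose x A hA
  exact abs_le.2 ⟨by linarith, by linarith⟩
end
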